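/- The Haar measure μ_0 of the compact group X is mixing for the Z^2-action: for all Borel sets A, B of X, μ_0(A ∩ T^k S^l B) tends to μ_0(A)·μ_0(B) as (k,l) → ∞ in Z^2. -/

import Mathlib

open MeasureTheory Filter

/-- Configurations: `ℤ²`-indexed families of elements of `ℤ/2ℤ`. -/
abbrev Config := ℤ → ℤ → ZMod 2

/-- The three-dot relation. -/
def threeDot (x : Config) : Prop :=
  ∀ k l : ℤ, x k l + x (k + 1) l + x k (l + 1) = 0

/-- The three-dot system `X`. -/
def Xset : Set Config := {x | threeDot x}

/-- The `ℤ²`-shift action: `shift k l x = T^k S^l x`. -/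
def shift (k l : ℤ) (x : Config) : Config := fun a b => x (a + k) (b + l)

/-- The shift `T`. -/
def Tm : Config → Config := shift 1 0

/-- The shift `S`. -/
def Sm : Config → Config := shift 0 1

/-- `Y` : points of `X` with coordinate `1` at the origin. -/
def Yset : Set Config := {x | threeDot x ∧ x 0 0 = 1}

/-- The map `σ : Y → Y`, extended to all configurations:
it equals `Tx` if `Tx` has a `1` at the origin, and `Sx` otherwise. -/
def sig (x : Config) : Config := if x 1 0 = 1 then Tm x else Sm x

/-- `Z` : points of `Y` with σ-antecedents of every depth (equivalently,
infinitely many σ-antecedents). -/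
def Zset : Set Config := {x | x ∈ Yset ∧ ∀ n : ℕ, ∃ y ∈ Yset, sig^[n] y = x}

/-- `Z₂` : points of `Z` having two distinct σ-preimages in `Z`. -/
def Z2set : Set Config :=
  {x | x ∈ Zset ∧ ∃ y z, y ≠ z ∧ y ∈ Zset ∧ z ∈ Zset ∧ sig y = x ∧ sig z = x}

/-- The σ-component of a point `x` of `Y`: points of the `ℤ²`-orbit of `x`
lying in `Y` whose forward σ-trajectory meets that of `x`. -/
def sigComp (x : Config) : Set Config :=
  {y | (∃ k l : ℤ, y = shift k l x) ∧ y ∈ Yset ∧ ∃ p q : ℕ, sig^[p] x = sig^[q] y}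

/-- Aperiodicity of a configuration for the `ℤ²`-action. -/
def Aperiodic (x : Config) : Prop := ∀ k l : ℤ, shift k l x = x → k = 0 ∧ l = 0

open Topology

/-- If uniformly dominated measures converge on a generating π-system and on the whole space,
they converge on every measurable set. -/
theorem tendsto_real_of_generateFrom {Ω ι : Type*} [m : MeasurableSpace Ω] {l : Filter ι}
    {μ ν : Measure Ω} {ρ : ι → Measure Ω} [IsFiniteMeasure μ] [IsFiniteMeasure ν]
    (hρ : ∀ i, ρ i ≤ μ) {C : Set (Set Ω)} (hgen : m = MeasurableSpace.generateFrom C)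
    (hpi : IsPiSystem C)
    (huniv : Tendsto (fun i => (ρ i).real Set.univ) l (𝓝 (ν.real Set.univ)))
    (hC : ∀ s ∈ C, Tendsto (fun i => (ρ i).real s) l (𝓝 (ν.real s)))
    {s : Set Ω} (hs : MeasurableSet s) :
    Tendsto (fun i => (ρ i).real s) l (𝓝 (ν.real s)) := by
  have hfin (i : ι) : IsFiniteMeasure (ρ i) := isFiniteMeasure_of_le μ (hρ i)
  induction s, hs using MeasurableSpace.induction_on_inter hgen hpi with
  | empty => simpa using tendsto_const_nhds
  | basic t ht => exact hC t ht
  | compl t ht ih =>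
    simp only [measureReal_compl ht]
    exact huniv.sub ih
  | iUnion f hd hf ih =>
    have hsum (κ : Measure Ω) [IsFiniteMeasure κ] :
        HasSum (fun n => κ.real (f n)) (κ.real (⋃ n, f n)) := by
      have h := ENNReal.hasSum_toReal (f := fun n => κ (f n))
        (by rw [← measure_iUnion hd hf]; exact measure_ne_top _ _)
      rwa [← ENNReal.tsum_toReal_eq (fun n => measure_ne_top _ _),
        ← measure_iUnion hd hf] at h
    simp only [← (hsum _).tsum_eq]
    refine tendsto_tsum_of_dominated_convergence (hsum μ).summable ih
      (Eventually.of_forall fun i n => ?_)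
    rw [Real.norm_of_nonneg measureReal_nonneg]
    exact ENNReal.toReal_mono (measure_ne_top _ _) (hρ i _)

theorem zmod_two_eq_zero_or_one (a : ZMod 2) : a = 0 ∨ a = 1 := by
  revert a
  decide

/-- The nontrivial additive character of `ℤ/2ℤ`, with real values. -/
def signChar (a : ZMod 2) : ℝ := if a = 0 then 1 else -1

theorem signChar_zero : signChar 0 = 1 := by simp [signChar]

theorem signChar_one : signChar 1 = -1 := by simp [signChar]

theorem signChar_add (a b : ZMod 2) : signChar (a + b) = signChar a * signChar b := by
  have h : (1 : ZMod 2) + 1 = 0 := rfl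
  rcases zmod_two_eq_zero_or_one a with rfl | rfl <;>
    rcases zmod_two_eq_zero_or_one b with rfl | rfl <;> simp [signChar, h]

theorem signChar_sum {ι : Type*} (s : Finset ι) (f : ι → ZMod 2) :
    signChar (∑ i ∈ s, f i) = ∏ i ∈ s, signChar (f i) := by
  classical
  induction s using Finset.induction_on with
  | empty => simp [signChar_zero]
  | insert i s hi ih => rw [Finset.sum_insert hi, Finset.prod_insert hi, signChar_add, ih]

theorem one_add_signChar_mul_signChar (a b : ZMod 2) :
    (1 + signChar a * signChar b) / 2 = if b = a then 1 else 0 := by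
  rcases zmod_two_eq_zero_or_one a with rfl | rfl <;>
    rcases zmod_two_eq_zero_or_one b with rfl | rfl <;> simp [signChar]

/-- The sum of the coordinates of a configuration over a finite set. -/
def sumOn (s : Finset (ℤ × ℤ)) (x : Config) : ZMod 2 := ∑ i ∈ s, x i.1 i.2

theorem sumOn_add (s : Finset (ℤ × ℤ)) (x y : Config) :
    sumOn s (x + y) = sumOn s x + sumOn s y := by
  simp [sumOn, Finset.sum_add_distrib]

theorem shift_add (k l : ℤ) (x y : Config) : shift k l (x + y) = shift k l x + shift k l y := rfl

theorem threeDot_shift {x : Config} (hx : threeDot x) (k l : ℤ) : threeDot (shift k l x) := by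
  intro a b
  simpa only [shift, add_right_comm] using hx (a + k) (b + l)

theorem measurable_coord (a b : ℤ) : Measurable fun x : Config => x a b :=
  (measurable_pi_apply b).comp (measurable_pi_apply a)

@[fun_prop]
theorem measurable_shift (k l : ℤ) : Measurable (shift k l) :=
  measurable_pi_lambda _ fun _ => measurable_pi_lambda _ fun _ => measurable_coord _ _

@[fun_prop]
theorem measurable_sumOn (s : Finset (ℤ × ℤ)) : Measurable (sumOn s) := by
  unfold sumOn
  fun_prop

@[fun_prop]
theorem measurable_signChar : Measurable signChar := measurable_from_top

theorem measurableSet_Xset : MeasurableSet Xset := by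
  have h : Xset = ⋂ k : ℤ, ⋂ l : ℤ,
      (fun x : Config => x k l + x (k + 1) l + x k (l + 1)) ⁻¹' {0} := by
    ext x
    simp [Xset, threeDot]
  rw [h]
  refine MeasurableSet.iInter fun k => MeasurableSet.iInter fun l => ?_
  have hm : Measurable fun x : Config => x k l + x (k + 1) l + x k (l + 1) := by fun_prop
  exact hm (measurableSet_singleton 0)

/-- The cylinder of configurations agreeing with `c` on `s`. -/
def cyl (s : Finset (ℤ × ℤ)) (c : Config) : Set Config := {x | ∀ i ∈ s, x i.1 i.2 = c i.1 i.2}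

theorem isPiSystem_cyl : IsPiSystem {A | ∃ s c, A = cyl s c} := by
  classical
  rintro _ ⟨s, c, rfl⟩ _ ⟨t, d, rfl⟩ ⟨z, hz, hz'⟩
  refine ⟨s ∪ t, z, Set.ext fun x => ⟨fun ⟨h, h'⟩ i hi => ?_, fun h =>
    ⟨fun i hi => ?_, fun i hi => ?_⟩⟩⟩
  · rcases Finset.mem_union.1 hi with hi | hi
    · rw [h i hi, hz i hi]
    · rw [h' i hi, hz' i hi]
  · rw [h i (Finset.mem_union_left _ hi), hz i hi]
  · rw [h i (Finset.mem_union_right _ hi), hz' i hi]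

theorem measurableSet_cyl (s : Finset (ℤ × ℤ)) (c : Config) : MeasurableSet (cyl s c) := by
  have h : cyl s c = ⋂ i ∈ s, (fun x : Config => x i.1 i.2) ⁻¹' {c i.1 i.2} := by
    ext x
    simp [cyl]
  rw [h]
  exact Finset.measurableSet_biInter _ fun i _ =>
    measurable_coord i.1 i.2 (measurableSet_singleton _)

theorem generateFrom_cyl :
    (inferInstance : MeasurableSpace Config) =
      MeasurableSpace.generateFrom {A | ∃ s c, A = cyl s c} := by
  apply le_antisymm
  · have h : @Measurable Config Config
        (MeasurableSpace.generateFrom {A | ∃ s c, A = cyl s c}) inferInstance id := by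
      refine @measurable_pi_lambda _ _ _ (_) _ _ fun a => @measurable_pi_lambda _ _ _ (_) _ _ fun b =>
        @measurable_to_countable' _ _ _ _ (_) _ fun v => ?_
      refine MeasurableSpace.measurableSet_generateFrom ⟨{(a, b)}, fun _ _ => v, ?_⟩
      ext x
      simp [cyl]
    intro s hs
    exact h hs
  · refine MeasurableSpace.generateFrom_le ?_
    rintro _ ⟨s, c, rfl⟩
    exact measurableSet_cyl s c

theorem indicator_cyl (s : Finset (ℤ × ℤ)) (c x : Config) :
    (cyl s c).indicator 1 x =
      ∑ t ∈ s.powerset, (1 / 2 : ℝ) ^ s.card * signChar (sumOn t c) * signChar (sumOn t x) := by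
  classical
  have h : (cyl s c).indicator (1 : Config → ℝ) x =
      ∏ i ∈ s, (1 / 2 : ℝ) * (1 + signChar (c i.1 i.2) * signChar (x i.1 i.2)) := by
    have h' (i : ℤ × ℤ) : (1 / 2 : ℝ) * (1 + signChar (c i.1 i.2) * signChar (x i.1 i.2)) =
        if x i.1 i.2 = c i.1 i.2 then 1 else 0 := by
      rw [← one_add_signChar_mul_signChar]
      ring
    simp only [h', Finset.prod_ite_zero, Finset.prod_const_one]
    simp [Set.indicator_apply, cyl]
  rw [h, Finset.prod_mul_distrib, Finset.prod_const, Finset.prod_one_add, Finset.mul_sum]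
  refine Finset.sum_congr rfl fun t _ => ?_
  rw [sumOn, sumOn, signChar_sum, signChar_sum, Finset.prod_mul_distrib, mul_assoc]

/-- The monomial `t ^ k * (1 + t) ^ l` in the field `𝔽₂(t)`. -/
noncomputable def mon (p : ℤ × ℤ) : RatFunc (ZMod 2) :=
  RatFunc.X ^ p.1 * (1 + RatFunc.X) ^ p.2

theorem one_add_X_ne_zero : (1 + RatFunc.X : RatFunc (ZMod 2)) ≠ 0 := by
  have h : (1 + RatFunc.X : RatFunc (ZMod 2)) =
      algebraMap (Polynomial (ZMod 2)) _ (Polynomial.X + Polynomial.C 1) := by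
    simp [add_comm]
  rw [h]
  exact RatFunc.algebraMap_ne_zero (Polynomial.X_add_C_ne_zero 1)

theorem mon_ne_zero (p : ℤ × ℤ) : mon p ≠ 0 :=
  mul_ne_zero (zpow_ne_zero _ RatFunc.X_ne_zero) (zpow_ne_zero _ one_add_X_ne_zero)

theorem mon_add (p q : ℤ × ℤ) : mon (p + q) = mon p * mon q := by
  have hX : (RatFunc.X : RatFunc (ZMod 2)) ≠ 0 := RatFunc.X_ne_zero
  rw [mon, mon, mon, Prod.fst_add, Prod.snd_add, zpow_add₀ hX, zpow_add₀ one_add_X_ne_zero]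
  ring

theorem mon_natCast (a b : ℕ) :
    mon (a, b) = algebraMap (Polynomial (ZMod 2)) _
      (Polynomial.X ^ a * (1 + Polynomial.X) ^ b) := by
  simp [mon]

theorem polynomial_mon_injective {a b a' b' : ℕ}
    (h : (Polynomial.X ^ a * (1 + Polynomial.X) ^ b : Polynomial (ZMod 2)) =
      Polynomial.X ^ a' * (1 + Polynomial.X) ^ b') : a = a' ∧ b = b' := by
  have hX : (1 + Polynomial.X : Polynomial (ZMod 2)) = Polynomial.X + Polynomial.C 1 := by
    simp [add_comm]
  have hdeg := congrArg Polynomial.natDegree h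
  have htr := congrArg Polynomial.natTrailingDegree h
  have h0 (n : ℕ) : ((1 + Polynomial.X : Polynomial (ZMod 2)) ^ n).natTrailingDegree = 0 := by
    apply Polynomial.natTrailingDegree_eq_zero_of_constantCoeff_ne_zero
    simp [Polynomial.coeff_zero_eq_eval_zero]
  have hne (n : ℕ) : (1 + Polynomial.X : Polynomial (ZMod 2)) ^ n ≠ 0 :=
    pow_ne_zero _ (hX ▸ Polynomial.X_add_C_ne_zero 1)
  have hXne (n : ℕ) : (Polynomial.X : Polynomial (ZMod 2)) ^ n ≠ 0 :=
    pow_ne_zero _ Polynomial.X_ne_zero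
  rw [Polynomial.natTrailingDegree_mul (hXne _) (hne _),
    Polynomial.natTrailingDegree_mul (hXne _) (hne _), h0, h0,
    Polynomial.natTrailingDegree_X_pow, Polynomial.natTrailingDegree_X_pow] at htr
  rw [Polynomial.natDegree_mul (hXne _) (hne _), Polynomial.natDegree_mul (hXne _) (hne _), hX,
    Polynomial.natDegree_pow, Polynomial.natDegree_pow, Polynomial.natDegree_pow,
    Polynomial.natDegree_pow, Polynomial.natDegree_X_add_C, Polynomial.natDegree_X] at hdeg
  omega

theorem mon_injective : Function.Injective mon := by
  rintro ⟨k, l⟩ ⟨k', l'⟩ h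
  obtain ⟨N, hN⟩ : ∃ N : ℕ, (N : ℤ) = |k| + |l| + |k'| + |l'| :=
    ⟨(|k| + |l| + |k'| + |l'|).toNat, Int.toNat_of_nonneg (by positivity)⟩
  have key : mon ((k, l) + ((N : ℤ), (N : ℤ))) = mon ((k', l') + ((N : ℤ), (N : ℤ))) := by rw [mon_add, mon_add, h]
  have hk := abs_nonneg k
  have hl := abs_nonneg l
  have hk' := abs_nonneg k'
  have hl' := abs_nonneg l'
  have hk1 := neg_abs_le k
  have hl1 := neg_abs_le l
  have hk1' := neg_abs_le k'
  have hl1' := neg_abs_le l'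
  obtain ⟨a, ha⟩ := Int.eq_ofNat_of_zero_le (show 0 ≤ k + N by linarith)
  obtain ⟨b, hb⟩ := Int.eq_ofNat_of_zero_le (show 0 ≤ l + N by linarith)
  obtain ⟨a', ha'⟩ := Int.eq_ofNat_of_zero_le (show 0 ≤ k' + N by linarith)
  obtain ⟨b', hb'⟩ := Int.eq_ofNat_of_zero_le (show 0 ≤ l' + N by linarith)
  rw [Prod.mk_add_mk, Prod.mk_add_mk, ha, hb, ha', hb', mon_natCast, mon_natCast] at key
  obtain ⟨h1, h2⟩ := polynomial_mon_injective (RatFunc.algebraMap_injective _ key)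
  ext <;> simp <;> omega

/-- The element of `𝔽₂(t)` dual to the functional `sumOn s`. -/
noncomputable def ev (s : Finset (ℤ × ℤ)) : RatFunc (ZMod 2) := ∑ i ∈ s, mon i

theorem exists_linear_eq_coord {x : Config} (hx : threeDot x) :
    ∃ φ : Polynomial (ZMod 2) →ₗ[ZMod 2] ZMod 2,
      ∀ a b : ℕ, φ (Polynomial.X ^ a * (1 + Polynomial.X) ^ b) = x a b := by
  refine ⟨(Polynomial.basisMonomials (ZMod 2)).constr (ZMod 2) fun n => x n 0, fun a b => ?_⟩
  induction b generalizing a with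
  | zero =>
    have h := (Polynomial.basisMonomials (ZMod 2)).constr_basis (ZMod 2)
      (fun n : ℕ => x n 0) a
    rw [Polynomial.coe_basisMonomials] at h
    simpa [Polynomial.X_pow_eq_monomial] using h
  | succ b ih =>
    have h : (Polynomial.X ^ a * (1 + Polynomial.X) ^ (b + 1) : Polynomial (ZMod 2)) =
        Polynomial.X ^ a * (1 + Polynomial.X) ^ b +
          Polynomial.X ^ (a + 1) * (1 + Polynomial.X) ^ b := by ring
    rw [h, map_add, ih, ih]
    push_cast
    exact CharTwo.add_eq_zero.1 (hx a b)

theorem sumOn_eq_zero_of_ev_eq_zero {s : Finset (ℤ × ℤ)} (hs : ev s = 0) {x : Config}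
    (hx : threeDot x) : sumOn s x = 0 := by
  obtain ⟨N, hN⟩ : ∃ N : ℕ, ∀ i ∈ s, 0 ≤ i.1 + N ∧ 0 ≤ i.2 + N := by
    refine ⟨∑ i ∈ s, (i.1.natAbs + i.2.natAbs), fun i hi => ?_⟩
    have h := Finset.single_le_sum (f := fun i : ℤ × ℤ => i.1.natAbs + i.2.natAbs)
      (fun _ _ => Nat.zero_le _) hi
    omega
  obtain ⟨φ, hφ⟩ := exists_linear_eq_coord (threeDot_shift hx (-N) (-N))
  have hpoly : ∑ i ∈ s, (Polynomial.X ^ (i.1 + N).toNat * (1 + Polynomial.X) ^ (i.2 + N).toNat :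
      Polynomial (ZMod 2)) = 0 := by
    apply RatFunc.algebraMap_injective
    rw [map_sum, map_zero, ← zero_mul (mon (N, N)), ← hs, ev, Finset.sum_mul]
    refine Finset.sum_congr rfl fun i hi => ?_
    rw [← mon_natCast, Int.toNat_of_nonneg (hN i hi).1, Int.toNat_of_nonneg (hN i hi).2, ← mon_add]
    rfl
  rw [← map_zero φ, ← hpoly, map_sum, sumOn]
  refine Finset.sum_congr rfl fun i hi => ?_
  rw [hφ, Int.toNat_of_nonneg (hN i hi).1, Int.toNat_of_nonneg (hN i hi).2]
  simp [shift]

theorem exists_sumOn_add_eq_one {s t : Finset (ℤ × ℤ)} {p : ℤ × ℤ}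
    (h : ev s + mon p * ev t ≠ 0) :
    ∃ y, threeDot y ∧ sumOn s y + sumOn t (shift p.1 p.2 y) = 1 := by
  obtain ⟨φ, hφ⟩ : ∃ φ : Module.Dual (ZMod 2) (RatFunc (ZMod 2)), φ (ev s + mon p * ev t) ≠ 0 := by
    by_contra! hall
    exact h ((Module.forall_dual_apply_eq_zero_iff (ZMod 2) _).1 hall)
  refine ⟨fun k l => φ (mon (k, l)), fun k l => ?_, ?_⟩
  · have hk : mon (k + 1, l) = mon (k, l) * RatFunc.X := by
      have := mon_add (k, l) (1, 0)
      simpa [mon] using this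
    have hl : mon (k, l + 1) = mon (k, l) * (1 + RatFunc.X) := by
      have := mon_add (k, l) (0, 1)
      simpa [mon] using this
    rw [← map_add, ← map_add, hk, hl, mul_add, mul_one, CharTwo.add_self_eq_zero, map_zero]
  · have h1 : sumOn s (fun k l => φ (mon (k, l))) +
        sumOn t (shift p.1 p.2 fun k l => φ (mon (k, l))) = φ (ev s + mon p * ev t) := by
      rw [map_add, ev, ev, Finset.mul_sum, map_sum, map_sum, sumOn, sumOn]
      congr 1
      refine Finset.sum_congr rfl fun i _ => ?_
      rw [mul_comm, ← mon_add]
      rfl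
    rw [h1]
    exact Fin.eq_one_of_ne_zero _ hφ

/-- For a fixed pair of functionals, not both trivial, only finitely many shifts create a
relation between them. -/
theorem eventually_ev_add_ne_zero {s t : Finset (ℤ × ℤ)} (h : ¬(ev s = 0 ∧ ev t = 0)) :
    ∀ᶠ p in cofinite, ev s + mon p * ev t ≠ 0 := by
  rw [eventually_cofinite]
  refine Set.Subsingleton.finite fun p hp q hq => ?_
  simp only [ne_eq, not_not, Set.mem_ofPred_eq] at hp hq
  have ht : ev t ≠ 0 := fun ht => h ⟨by simpa [ht] using hp, ht⟩
  exact mon_injective (mul_right_cancel₀ ht (add_left_cancel (hp.trans hq.symm)))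

/-- Translation-invariant probability measures carried by the three-dot system. -/
structure IsThreeDotHaar (μ : Measure Config) : Prop where
  prob : IsProbabilityMeasure μ
  ae_threeDot : ∀ᵐ x ∂μ, threeDot x
  measurePreserving_add : ∀ y, threeDot y → MeasurePreserving (fun z => y + z) μ μ

namespace IsThreeDotHaar

theorem integral_eq_zero {μ : Measure Config} (hμ : IsThreeDotHaar μ) {s t : Finset (ℤ × ℤ)}
    {p : ℤ × ℤ} (h : ev s + mon p * ev t ≠ 0) :
    ∫ x, signChar (sumOn s x) * signChar (sumOn t (shift p.1 p.2 x)) ∂μ = 0 := by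
  obtain ⟨y, hy, hy1⟩ := exists_sumOn_add_eq_one h
  have hmp := hμ.measurePreserving_add y hy
  have key : ∫ x, signChar (sumOn s x) * signChar (sumOn t (shift p.1 p.2 x)) ∂μ =
      -∫ x, signChar (sumOn s x) * signChar (sumOn t (shift p.1 p.2 x)) ∂μ := by
    conv_lhs => rw [← hmp.map_eq]
    rw [integral_map hmp.measurable.aemeasurable
      (by fun_prop : Measurable _).aestronglyMeasurable, ← integral_neg]
    refine integral_congr_ae (Eventually.of_forall fun x => ?_)
    have : signChar (sumOn s y) * signChar (sumOn t (shift p.1 p.2 y)) = -1 := by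
      rw [← signChar_add, hy1, signChar_one]
    simp only [shift_add, sumOn_add, signChar_add]
    linear_combination
      signChar (sumOn s x) * signChar (sumOn t (shift p.1 p.2 x)) * this
  linarith

theorem integral_eq_one {μ : Measure Config} (hμ : IsThreeDotHaar μ) {s t : Finset (ℤ × ℤ)}
    (p : ℤ × ℤ) (hs : ev s = 0) (ht : ev t = 0) :
    ∫ x, signChar (sumOn s x) * signChar (sumOn t (shift p.1 p.2 x)) ∂μ = 1 := by
  have := hμ.prob
  have h : ∀ᵐ x ∂μ, signChar (sumOn s x) * signChar (sumOn t (shift p.1 p.2 x)) = 1 := by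
    filter_upwards [hμ.ae_threeDot] with x hx
    rw [sumOn_eq_zero_of_ev_eq_zero hs hx,
      sumOn_eq_zero_of_ev_eq_zero ht (threeDot_shift hx _ _), signChar_zero, mul_one]
  rw [integral_congr_ae h]
  simp

open Classical in
theorem integral_sumOn {μ : Measure Config} (hμ : IsThreeDotHaar μ) (s : Finset (ℤ × ℤ)) :
    ∫ x, signChar (sumOn s x) ∂μ = if ev s = 0 then 1 else 0 := by
  have he : ev ∅ = 0 := by simp [ev]
  have h (x : Config) : signChar (sumOn s x) =
      signChar (sumOn s x) * signChar (sumOn ∅ (shift (0 : ℤ × ℤ).1 (0 : ℤ × ℤ).2 x)) := by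
    simp [sumOn, signChar_zero]
  rw [integral_congr_ae (Eventually.of_forall h)]
  split_ifs with hs
  · exact hμ.integral_eq_one 0 hs he
  · exact hμ.integral_eq_zero (by simpa [he] using hs)

theorem eventually_integral_eq {μ : Measure Config} (hμ : IsThreeDotHaar μ)
    (s t : Finset (ℤ × ℤ)) :
    ∀ᶠ p : ℤ × ℤ in cofinite,
      ∫ x, signChar (sumOn s x) * signChar (sumOn t (shift p.1 p.2 x)) ∂μ =
        (∫ x, signChar (sumOn s x) ∂μ) * ∫ x, signChar (sumOn t x) ∂μ := by
  rw [hμ.integral_sumOn, hμ.integral_sumOn]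
  by_cases h : ev s = 0 ∧ ev t = 0
  · filter_upwards with p
    simp [hμ.integral_eq_one p h.1 h.2, h.1, h.2]
  · filter_upwards [eventually_ev_add_ne_zero h] with p hp
    rw [hμ.integral_eq_zero hp]
    by_cases hs : ev s = 0 <;> simp_all

theorem map_shift {μ : Measure Config} (hμ : IsThreeDotHaar μ) (k l : ℤ) :
    IsThreeDotHaar (μ.map (shift k l)) := by
  have := hμ.prob
  refine ⟨Measure.isProbabilityMeasure_map (measurable_shift k l).aemeasurable, ?_, fun y hy => ?_⟩
  · rw [ae_map_iff (measurable_shift k l).aemeasurable measurableSet_Xset]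
    filter_upwards [hμ.ae_threeDot] with x hx using threeDot_shift hx k l
  · have hmp := hμ.measurePreserving_add _ (threeDot_shift hy (-k) (-l))
    have hm : Measurable fun z : Config => y + z := by fun_prop
    refine ⟨hm, ?_⟩
    rw [Measure.map_map hm (measurable_shift k l)]
    conv_rhs => rw [← hmp.map_eq, Measure.map_map (measurable_shift k l) hmp.measurable]
    congr 1
    ext x a b
    simp [shift]

theorem integrable_signChar {μ : Measure Config} (hμ : IsThreeDotHaar μ) {f : Config → ZMod 2}
    (hf : Measurable f) : Integrable (fun x => signChar (f x)) μ := by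
  have := hμ.prob
  refine Integrable.of_bound (C := 1) (by fun_prop : Measurable _).aestronglyMeasurable
    (Eventually.of_forall fun x => ?_)
  unfold signChar
  split_ifs <;> simp

theorem real_cyl {μ : Measure Config} (hμ : IsThreeDotHaar μ) (s : Finset (ℤ × ℤ)) (c : Config) :
    μ.real (cyl s c) = ∑ t ∈ s.powerset,
      (1 / 2 : ℝ) ^ s.card * signChar (sumOn t c) * ∫ x, signChar (sumOn t x) ∂μ := by
  rw [← integral_indicator_one (measurableSet_cyl s c),
    integral_congr_ae (Eventually.of_forall (indicator_cyl s c)), integral_finsetSum]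
  · simp only [integral_const_mul]
  · exact fun t _ => (hμ.integrable_signChar (measurable_sumOn t)).const_mul _

theorem map_shift_eq {μ : Measure Config} (hμ : IsThreeDotHaar μ) (k l : ℤ) :
    μ.map (shift k l) = μ := by
  have hν := hμ.map_shift k l
  have := hμ.prob
  have := hν.prob
  refine ext_of_generate_finite _ generateFrom_cyl isPiSystem_cyl ?_ (by simp)
  rintro _ ⟨s, c, rfl⟩
  rw [← measureReal_eq_measureReal_iff, hν.real_cyl, hμ.real_cyl]
  simp only [hμ.integral_sumOn, hν.integral_sumOn]

theorem real_cyl_inter {μ : Measure Config} (hμ : IsThreeDotHaar μ) (s t : Finset (ℤ × ℤ))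
    (c d : Config) (p : ℤ × ℤ) :
    μ.real (cyl s c ∩ shift p.1 p.2 ⁻¹' cyl t d) = ∑ u ∈ s.powerset, ∑ v ∈ t.powerset,
      ((1 / 2 : ℝ) ^ s.card * signChar (sumOn u c)) *
        ((1 / 2 : ℝ) ^ t.card * signChar (sumOn v d)) *
          ∫ x, signChar (sumOn u x) * signChar (sumOn v (shift p.1 p.2 x)) ∂μ := by
  have hint (u v : Finset (ℤ × ℤ)) : Integrable
      (fun x => signChar (sumOn u x) * signChar (sumOn v (shift p.1 p.2 x))) μ := by
    simp only [← signChar_add]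
    exact hμ.integrable_signChar (by fun_prop)
  have hfun (x : Config) : (cyl s c ∩ shift p.1 p.2 ⁻¹' cyl t d).indicator 1 x =
      ∑ u ∈ s.powerset, ∑ v ∈ t.powerset, ((1 / 2 : ℝ) ^ s.card * signChar (sumOn u c)) *
        ((1 / 2 : ℝ) ^ t.card * signChar (sumOn v d)) *
          (signChar (sumOn u x) * signChar (sumOn v (shift p.1 p.2 x))) := by
    have h : (shift p.1 p.2 ⁻¹' cyl t d).indicator (1 : Config → ℝ) x =
      (cyl t d).indicator 1 (shift p.1 p.2 x) := rfl
    rw [Set.inter_indicator_one, Pi.mul_apply, h, indicator_cyl, indicator_cyl,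
      Finset.sum_mul_sum]
    exact Finset.sum_congr rfl fun u _ => Finset.sum_congr rfl fun v _ => by ring
  rw [← integral_indicator_one ((measurableSet_cyl s c).inter
      (measurable_shift _ _ (measurableSet_cyl t d))),
    integral_congr_ae (Eventually.of_forall hfun), integral_finsetSum]
  · refine Finset.sum_congr rfl fun u _ => ?_
    rw [integral_finsetSum _ fun v _ => (hint u v).const_mul _]
    simp only [integral_const_mul]
  · exact fun u _ => integrable_finsetSum _ fun v _ => (hint u v).const_mul _

theorem tendsto_cyl {μ : Measure Config} (hμ : IsThreeDotHaar μ) (s t : Finset (ℤ × ℤ))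
    (c d : Config) :
    Tendsto (fun p : ℤ × ℤ => μ.real (cyl s c ∩ shift p.1 p.2 ⁻¹' cyl t d)) cofinite
      (𝓝 (μ.real (cyl s c) * μ.real (cyl t d))) := by
  simp only [hμ.real_cyl_inter]
  rw [hμ.real_cyl, hμ.real_cyl, Finset.sum_mul_sum]
  refine tendsto_finsetSum _ fun u _ => tendsto_finsetSum _ fun v _ => ?_
  refine tendsto_const_nhds.congr' ?_
  filter_upwards [hμ.eventually_integral_eq u v] with p hp
  rw [hp]
  ring

theorem real_preimage_shift {μ : Measure Config} (hμ : IsThreeDotHaar μ) (k l : ℤ)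
    {B : Set Config} (hB : MeasurableSet B) : μ.real (shift k l ⁻¹' B) = μ.real B := by
  rw [← map_measureReal_apply (measurable_shift k l) hB, hμ.map_shift_eq]

theorem tendsto_cyl_left {μ : Measure Config} (hμ : IsThreeDotHaar μ) (s : Finset (ℤ × ℤ))
    (c : Config) {B : Set Config} (hB : MeasurableSet B) :
    Tendsto (fun p : ℤ × ℤ => μ.real (cyl s c ∩ shift p.1 p.2 ⁻¹' B)) cofinite
      (𝓝 (μ.real (cyl s c) * μ.real B)) := by
  have := hμ.prob
  have hρ (p : ℤ × ℤ) {C : Set Config} (hC : MeasurableSet C) :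
      ((μ.restrict (cyl s c)).map (shift p.1 p.2)).real C =
        μ.real (cyl s c ∩ shift p.1 p.2 ⁻¹' C) := by
    rw [map_measureReal_apply (measurable_shift _ _) hC,
      measureReal_restrict_apply (measurable_shift _ _ hC), Set.inter_comm]
  have hν (C : Set Config) :
      ((μ (cyl s c)) • μ).real C = μ.real (cyl s c) * μ.real C := by
    simp [Measure.real]
  have : IsFiniteMeasure ((μ (cyl s c)) • μ) := μ.smul_finite (measure_ne_top _ _)
  have key := tendsto_real_of_generateFrom (l := cofinite) (μ := μ) (ν := (μ (cyl s c)) • μ)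
    (ρ := fun p : ℤ × ℤ => (μ.restrict (cyl s c)).map (shift p.1 p.2))
    (fun p => (Measure.map_mono Measure.restrict_le_self (measurable_shift _ _)).trans_eq
      (hμ.map_shift_eq _ _)) generateFrom_cyl isPiSystem_cyl ?_ ?_ hB
  · simpa only [hρ _ hB, hν] using key
  · simp [hρ, hν]
  · rintro _ ⟨t, d, rfl⟩
    simpa only [hρ _ (measurableSet_cyl t d), hν] using hμ.tendsto_cyl s t c d

theorem tendsto_real_inter {μ : Measure Config} (hμ : IsThreeDotHaar μ) {A B : Set Config}
    (hA : MeasurableSet A) (hB : MeasurableSet B) :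
    Tendsto (fun p : ℤ × ℤ => μ.real (A ∩ shift p.1 p.2 ⁻¹' B)) cofinite
      (𝓝 (μ.real A * μ.real B)) := by
  have := hμ.prob
  have hν (C : Set Config) : ((μ B) • μ).real C = μ.real C * μ.real B := by
    simp [Measure.real, mul_comm]
  have : IsFiniteMeasure ((μ B) • μ) := μ.smul_finite (measure_ne_top _ _)
  have key := tendsto_real_of_generateFrom (l := cofinite) (μ := μ) (ν := (μ B) • μ)
    (ρ := fun p : ℤ × ℤ => μ.restrict (shift p.1 p.2 ⁻¹' B))
    (fun p => Measure.restrict_le_self) generateFrom_cyl isPiSystem_cyl ?_ ?_ hA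
  · simpa only [measureReal_restrict_apply hA, hν] using key
  · simp [hν, hμ.real_preimage_shift _ _ hB]
  · rintro _ ⟨s, c, rfl⟩
    simpa only [measureReal_restrict_apply (measurableSet_cyl s c), hν] using
      hμ.tendsto_cyl_left s c hB

end IsThreeDotHaar

/-- The Haar measure of the compact group `X` (characterized as the
translation-invariant probability measure carried by `X`) is mixing for the
`ℤ²`-action. -/
theorem stmt11 (μ₀ : Measure Config) [IsProbabilityMeasure μ₀]
    (hX : μ₀ Xset = 1)
    (hHaar : ∀ y : Config, threeDot y →
      MeasurePreserving (fun z => y + z) μ₀ μ₀) :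
    ∀ A B : Set Config, MeasurableSet A → MeasurableSet B →
      Tendsto (fun p : ℤ × ℤ => μ₀ (A ∩ shift p.1 p.2 ⁻¹' B)) cofinite
        (nhds (μ₀ A * μ₀ B)) := by
  have hμ : IsThreeDotHaar μ₀ :=
    ⟨inferInstance, (prob_compl_eq_zero_iff measurableSet_Xset).2 hX, hHaar⟩
  intro A B hA hB
  rw [← ENNReal.tendsto_toReal_iff (fun _ => measure_ne_top _ _)
    (ENNReal.mul_ne_top (measure_ne_top _ _) (measure_ne_top _ _)), ENNReal.toReal_mul]
  exact hμ.tendsto_real_inter hA hB
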